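/- Fix finite nonempty types S and A, a transition kernel F : S → A → S → ℝ with F s a s' ≥ 0 and ∑_{s'} F s a s' = 1; a perturbation prior p : S → S → ℝ with p s s̃ > 0 and ∑_{s̃} p s s̃ = 1; a policy π : S → A → ℝ with π s̃ a ≥ 0 and ∑_a π s̃ a = 1; a reward r : S → A → ℝ; γ with 0 ≤ γ < 1; α_attk > 0; α_ent ∈ ℝ; and f : ℝ → ℝ convex with f 1 = 0. Define H(s̃) = −∑_a π s̃ a * Real.log (π s̃ a); for Q : S → A → ℝ, V_Q(s, s̃) = ∑_a π s̃ a * Q s a + α_ent * H(s̃); the soft-worst functional W_s(v) = ⨅ over probability vectors ν on S of ( ∑_{s̃} ν s̃ * v s̃ + α_attk * ∑_{s̃} p s s̃ * f (ν s̃ / p s s̃) ); and the agent operator (T_ag Q)(s, a) = r s a + γ * ∑_{s'} F s a s' * W_{s'}(V_Q(s', ·)). Then T_ag is a γ-contraction in sup norm: for all Q₁, Q₂ : S → A → ℝ, max_{(s,a)} |(T_ag Q₁)(s,a) − (T_ag Q₂)(s,a)| ≤ γ * max_{(s,a)} |Q₁(s,a) − Q₂(s,a)|. -/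

import Mathlib

/-!
Convex combinations and pointwise infima of `K`-Lipschitz functions are `K`-Lipschitz. For the sup
metric, the operator is built from coordinate projections by averaging over actions, adding a
constant, averaging over perturbed states, taking an infimum, averaging over next states and
multiplying by `γ`; only the last step changes the Lipschitz constant. The divergence enters only
through the finiteness of the infimum, which Jensen's inequality provides.
-/

open scoped NNReal

section Lipschitz

variable {ι X : Type*}

theorem lipschitzWith_pi [Fintype ι] [PseudoEMetricSpace X] {E : ι → Type*}
    [∀ i, PseudoEMetricSpace (E i)] {K : ℝ≥0} {f : X → ∀ i, E i}
    (hf : ∀ i, LipschitzWith K fun x => f x i) : LipschitzWith K f :=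
  fun x y => edist_pi_le_iff.2 fun i => hf i x y

variable [PseudoMetricSpace X] {K : ℝ≥0}

theorem lipschitzWith_sum_smul_of_mem_stdSimplex [Fintype ι] {E : Type*}
    [SeminormedAddCommGroup E] [NormedSpace ℝ E] {w : ι → ℝ} (hw : w ∈ stdSimplex ℝ ι)
    {g : ι → X → E} (hg : ∀ i, LipschitzWith K (g i)) :
    LipschitzWith K fun x => ∑ i, w i • g i x :=
  .of_dist_le_mul fun x y => calc
    dist (∑ i, w i • g i x) (∑ i, w i • g i y)
      ≤ ∑ i, w i * (K * dist x y) := dist_sum_sum_le_of_le _ fun i _ => by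
        rw [dist_smul₀, Real.norm_of_nonneg (hw.1 i)]
        exact mul_le_mul_of_nonneg_left ((hg i).dist_le_mul x y) (hw.1 i)
    _ = K * dist x y := by rw [← Finset.sum_mul, hw.2, one_mul]

theorem bddBelow_range_of_lipschitzWith {g : ι → X → ℝ} (hg : ∀ i, LipschitzWith K (g i)) {x₀ : X}
    (hx₀ : BddBelow (Set.range fun i => g i x₀)) (x : X) : BddBelow (Set.range fun i => g i x) := by
  obtain ⟨b, hb⟩ := hx₀
  refine ⟨b - K * dist x₀ x, Set.forall_mem_range.2 fun i => ?_⟩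
  rw [sub_le_iff_le_add]
  exact (hb ⟨i, rfl⟩).trans ((hg i).le_add_mul x₀ x)

theorem lipschitzWith_ciInf [Nonempty ι] {g : ι → X → ℝ} (hg : ∀ i, LipschitzWith K (g i)) {x₀ : X}
    (hx₀ : BddBelow (Set.range fun i => g i x₀)) : LipschitzWith K fun x => ⨅ i, g i x :=
  .of_le_add_mul K fun x y => by
    rw [← sub_le_iff_le_add]
    refine le_ciInf fun i => sub_le_iff_le_add.2 ?_
    exact (ciInf_le (bddBelow_range_of_lipschitzWith hg hx₀ x) i).trans ((hg i).le_add_mul x y)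

theorem dist_eq_sup'_prod {α β E : Type*} [Fintype α] [Nonempty α] [Fintype β] [Nonempty β]
    [PseudoMetricSpace E] (f g : α → β → E) :
    dist f g = Finset.univ.sup' Finset.univ_nonempty
      fun p : α × β => dist (f p.1 p.2) (g p.1 p.2) := by
  refine le_antisymm ?_ (Finset.sup'_le _ _ fun p _ =>
    (dist_le_pi_dist (f p.1) (g p.1) p.2).trans (dist_le_pi_dist f g p.1))
  refine dist_pi_le_iff'.2 fun a => dist_pi_le_iff'.2 fun b => ?_
  exact Finset.le_sup' (fun p : α × β => dist (f p.1 p.2) (g p.1 p.2)) (Finset.mem_univ (a, b))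

end Lipschitz

/-- The Csiszár `f`-divergence `D_f(q ‖ p)` of weights on a finite type. A point with `p i = 0`
contributes `0` whatever `q i` is, so `p` is meant to have full support. -/
noncomputable def fDivergence {ι : Type*} [Fintype ι] (f : ℝ → ℝ) (p q : ι → ℝ) : ℝ :=
  ∑ i, p i * f (q i / p i)

theorem le_fDivergence {ι : Type*} [Fintype ι] {f : ℝ → ℝ} (hf : ConvexOn ℝ (Set.Ici 0) f)
    {p q : ι → ℝ} (hp : ∀ i, 0 < p i) (hp1 : ∑ i, p i = 1) (hq : q ∈ stdSimplex ℝ ι) :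
    f 1 ≤ fDivergence f p q := by
  have mean_ratio : ∑ i, p i • (q i / p i) = 1 := by
    simp only [smul_eq_mul, mul_div_cancel₀ _ (hp _).ne', hq.2]
  have jensen := hf.map_sum_le (t := Finset.univ) (p := fun i => q i / p i)
    (fun i _ => (hp i).le) hp1 fun i _ => div_nonneg (hq.1 i) (hp i).le
  rwa [mean_ratio] at jensen

/-- The soft worst case of `v` over all probability vectors, a deviation `ν` of the adversary being
penalised by `D ν`. Meaningful when `D` is bounded below on the simplex: otherwise the real infimum
is `0`. -/
noncomputable def softWorst {ι : Type*} [Fintype ι] (D : (ι → ℝ) → ℝ) (v : ι → ℝ) : ℝ :=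
  ⨅ ν : stdSimplex ℝ ι, ((∑ i, ν.1 i * v i) + D ν.1)

theorem lipschitzWith_softWorst {ι : Type*} [Fintype ι] [Nonempty ι] {D : (ι → ℝ) → ℝ}
    (hD : BddBelow (D '' stdSimplex ℝ ι)) : LipschitzWith 1 (softWorst D) := by
  have objective (ν : stdSimplex ℝ ι) :
      LipschitzWith 1 fun v : ι → ℝ => (∑ i, ν.1 i * v i) + D ν.1 := by
    simpa using (lipschitzWith_sum_smul_of_mem_stdSimplex ν.2
      (LipschitzWith.eval (α := fun _ => ℝ))).add (.const (D ν.1))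
  refine lipschitzWith_ciInf objective (x₀ := 0) ?_
  simpa [Set.image_eq_range] using hD

/-- The agent's Bellman operator on action values: the next state is drawn from `F s a`, an
adversary with penalty `D s'` shows the agent a perturbed observation `t : O`, the agent acts
according to `π t` and earns the bonus `b t` (a multiple of the policy
entropy in the soft setting). -/
noncomputable def agentBellman {S A O : Type*} [Fintype S] [Fintype A] [Fintype O]
    (F : S → A → S → ℝ) (D : S → (O → ℝ) → ℝ) (π : O → A → ℝ) (b : O → ℝ) (r : S → A → ℝ) (γ : ℝ)
    (Q : S → A → ℝ) (s : S) (a : A) : ℝ :=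
  r s a + γ * ∑ s', F s a s' * softWorst (D s') fun t => (∑ a', π t a' * Q s' a') + b t

theorem lipschitzWith_expected_value_add {S A O : Type*} [Fintype S] [Fintype A] [Fintype O]
    {π : O → A → ℝ} (hπ : ∀ t, π t ∈ stdSimplex ℝ A) (b : O → ℝ) (s : S) :
    LipschitzWith 1 fun (Q : S → A → ℝ) t => (∑ a, π t a * Q s a) + b t := by
  have eval_eval (a : A) : LipschitzWith 1 fun Q : S → A → ℝ => Q s a := by
    simpa [Function.comp_def] using (LipschitzWith.eval (α := fun _ : A => ℝ) a).comp
      (LipschitzWith.eval (α := fun _ : S => A → ℝ) s)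
  refine lipschitzWith_pi fun t => ?_
  simpa using (lipschitzWith_sum_smul_of_mem_stdSimplex (hπ t) eval_eval).add (.const (b t))

theorem valt_agent_bellman_contraction_general
    {S A O : Type*} [Fintype S] [Fintype A] [Fintype O] [Nonempty O]
    {F : S → A → S → ℝ} (hF : ∀ s a, F s a ∈ stdSimplex ℝ S)
    {D : S → (O → ℝ) → ℝ} (hD : ∀ s, BddBelow (D s '' stdSimplex ℝ O))
    {π : O → A → ℝ} (hπ : ∀ t, π t ∈ stdSimplex ℝ A)
    (b : O → ℝ) (r : S → A → ℝ) (γ : ℝ≥0) :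
    LipschitzWith γ (agentBellman F D π b r γ) := by
  have next_value (s : S) : LipschitzWith 1 fun Q : S → A → ℝ =>
      softWorst (D s) fun t => (∑ a, π t a * Q s a) + b t := by
    simpa [Function.comp_def] using
      (lipschitzWith_softWorst (hD s)).comp (lipschitzWith_expected_value_add hπ b s)
  refine lipschitzWith_pi fun s => lipschitzWith_pi fun a => ?_
  have expected_next_value := lipschitzWith_sum_smul_of_mem_stdSimplex (hF s a) next_value
  simpa [agentBellman] using
    (LipschitzWith.const (r s a)).add ((lipschitzWith_smul (γ : ℝ)).comp expected_next_value)

/-- Agent-side soft worst-case policy evaluation contraction: the agent's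
soft-worst Bellman operator with a general f-divergence soft constraint is a
γ-contraction in sup norm. -/
theorem valt_agent_bellman_contraction
    {S A : Type*} [Fintype S] [Nonempty S] [Fintype A] [Nonempty A]
    (F : S → A → S → ℝ) (hF0 : ∀ s a s', 0 ≤ F s a s')
    (hF1 : ∀ s a, ∑ s', F s a s' = 1)
    (p : S → S → ℝ) (hp0 : ∀ s t, 0 < p s t) (hp1 : ∀ s, ∑ t, p s t = 1)
    (π : S → A → ℝ) (hπ0 : ∀ t a, 0 ≤ π t a) (hπ1 : ∀ t, ∑ a, π t a = 1)
    (r : S → A → ℝ) (γ : ℝ) (hγ0 : 0 ≤ γ) (hγ1 : γ < 1)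
    (αattk αent : ℝ) (hαattk : 0 < αattk)
    (f : ℝ → ℝ) (hf : ConvexOn ℝ Set.univ f) (hf1 : f 1 = 0)
    (H : S → ℝ) (hH : ∀ t, H t = -∑ a, π t a * Real.log (π t a))
    (V : (S → A → ℝ) → S → S → ℝ)
    (hV : ∀ Q s t, V Q s t = (∑ a, π t a * Q s a) + αent * H t)
    (W : S → (S → ℝ) → ℝ)
    (hW : ∀ s v, W s v =
      ⨅ ν : {w : S → ℝ // (∀ t, 0 ≤ w t) ∧ ∑ t, w t = 1},
        ((∑ t, ν.1 t * v t) + αattk * ∑ t, p s t * f (ν.1 t / p s t)))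
    (Tag : (S → A → ℝ) → S → A → ℝ)
    (hTag : ∀ Q s a, Tag Q s a =
      r s a + γ * ∑ s', F s a s' * W s' (fun t => V Q s' t))
    (Q₁ Q₂ : S → A → ℝ) :
    Finset.univ.sup' Finset.univ_nonempty
        (fun sa : S × A => |Tag Q₁ sa.1 sa.2 - Tag Q₂ sa.1 sa.2|) ≤
      γ * Finset.univ.sup' Finset.univ_nonempty
        (fun sa : S × A => |Q₁ sa.1 sa.2 - Q₂ sa.1 sa.2|) := by
  have hTag_eq : Tag = agentBellman F (fun s w => αattk * fDivergence f (p s) w) π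
      (fun t => αent * H t) r γ := by
    funext Q s a
    simp only [hTag, hW, hV]
    rfl
  have hD (s : S) : BddBelow ((fun w => αattk * fDivergence f (p s) w) '' stdSimplex ℝ S) :=
    ⟨αattk * f 1, Set.forall_mem_image.2 fun w hw => mul_le_mul_of_nonneg_left
      (le_fDivergence (hf.subset (Set.subset_univ _) (convex_Ici 0)) (hp0 s) (hp1 s) hw) hαattk.le⟩
  lift γ to ℝ≥0 using hγ0
  simp only [← Real.dist_eq, ← dist_eq_sup'_prod, hTag_eq]
  exact (valt_agent_bellman_contraction_general (fun s a => ⟨hF0 s a, hF1 s a⟩) hD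
    (fun t => ⟨hπ0 t, hπ1 t⟩) _ r γ).dist_le_mul Q₁ Q₂
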